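/- Suppose r1, r2, θ, β are twice differentiable on an interval, r1(t), r2(t) > 0 and d1(t), d2(t), d3(t) > 0 there, and they satisfy the reduced 6-body system θ̈ = (m2 B1 − 2 ṙ1 θ̇)/r1, r̈1 = r1 θ̇² − 1/(√3 r1²) + m2 A1, β̈ = (B2 − 2 ṙ2 β̇)/r2, r̈2 = r2 β̇² + A2 − m2/(√3 r2²). Then the total energy E(t) = (3/2)(ṙ1² + r1² θ̇²) + (3 m2/2)(ṙ2² + r2² β̇²) − ( √3/r1 + √3 m2²/r2 + 3 m2 (1/d1 + 1/d2 + 1/d3) ) is constant on the interval. -/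

import Mathlib

open Real

/-!
By the threefold symmetry, the six bodies reduce to one body of each triangle, at polar coordinates
`(r₁, θ)` and `(r₂, β)`. The first is attracted by the three bodies at `(r₂, β + α)` with
`α = π / 3, π, -π / 3`; the second, by the three bodies at `(r₁, θ - α)`. The other two bodies of
its own triangle act on each of them like a central mass. The power of the mutual attraction of two
unit masses is the rate of change of their reciprocal distance, so the kinetic energies gain exactly
what the potential energy loses.
-/

theorem hasDerivAt_const_div {𝕜 : Type*} [NontriviallyNormedField 𝕜] {f : 𝕜 → 𝕜} {f' x : 𝕜}
    (c : 𝕜) (hf : HasDerivAt f f' x) (hx : f x ≠ 0) :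
    HasDerivAt (fun y ↦ c / f y) (f' * (-c / f x ^ 2)) x := by
  refine ((hasDerivAt_const x c).fun_div hf hx).congr_deriv ?_
  ring

theorem hasDerivAt_one_div_sqrt {f : ℝ → ℝ} {f' x : ℝ} (hf : HasDerivAt f f' x) (hx : √(f x) ≠ 0) :
    HasDerivAt (fun y ↦ 1 / √(f y)) (-(f' / 2) / √(f x) ^ 3) x := by
  have hfx : f x ≠ 0 := fun h0 ↦ hx (by rw [h0, sqrt_zero])
  refine (hasDerivAt_const_div 1 (hf.sqrt hfx) hx).congr_deriv ?_
  field_simp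

section PolarMotion

/-- The kinetic energy of a unit mass moving in the plane with polar coordinates `(r, θ)`. -/
noncomputable def polarKineticEnergy (r θ : ℝ → ℝ) (t : ℝ) : ℝ :=
  (deriv r t ^ 2 + r t ^ 2 * deriv θ t ^ 2) / 2

/-- The motion with polar coordinates `(r, θ)` is twice differentiable at time `t`, and its
acceleration there has radial component `R` and tangential component `T`. -/
structure HasPolarAccelerationAt (r θ : ℝ → ℝ) (R T t : ℝ) : Prop where
  differentiableAt_radius : DifferentiableAt ℝ r t
  differentiableAt_deriv_radius : DifferentiableAt ℝ (deriv r) t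
  differentiableAt_angle : DifferentiableAt ℝ θ t
  differentiableAt_deriv_angle : DifferentiableAt ℝ (deriv θ) t
  radial : deriv (deriv r) t - r t * deriv θ t ^ 2 = R
  tangential : r t * deriv (deriv θ) t + 2 * deriv r t * deriv θ t = T

variable {r θ : ℝ → ℝ} {R T t : ℝ}

theorem HasPolarAccelerationAt.hasDerivAt_polarKineticEnergy
    (h : HasPolarAccelerationAt r θ R T t) :
    HasDerivAt (polarKineticEnergy r θ) (deriv r t * R + r t * deriv θ t * T) t := by
  have hr := h.differentiableAt_radius.hasDerivAt
  have hr' := h.differentiableAt_deriv_radius.hasDerivAt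
  have hθ' := h.differentiableAt_deriv_angle.hasDerivAt
  refine (((hr'.fun_pow 2).fun_add
    ((hr.fun_pow 2).fun_mul (hθ'.fun_pow 2))).div_const 2).congr_deriv ?_
  rw [← h.radial, ← h.tangential]
  ring

end PolarMotion

section MutualAttraction

/-- The distance between the points with polar coordinates `(x, 0)` and `(y, φ)`, by the law of
cosines. -/
noncomputable def polarDist (x y φ : ℝ) : ℝ :=
  √(x ^ 2 - 2 * x * y * cos φ + y ^ 2)

/-- The radial component of the inverse-square attraction exerted on a particle at polar coordinates
`(x, 0)` by a unit mass at `(y, φ)`. -/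
noncomputable def radialAttraction (x y φ : ℝ) : ℝ :=
  (y * cos φ - x) / polarDist x y φ ^ 3

/-- The tangential component of the inverse-square attraction exerted on a particle at polar
coordinates `(x, 0)` by a unit mass at `(y, φ)`. -/
noncomputable def tangentialAttraction (x y φ : ℝ) : ℝ :=
  y * sin φ / polarDist x y φ ^ 3

theorem polarDist_swap_neg (x y φ : ℝ) : polarDist y x (-φ) = polarDist x y φ := by
  rw [polarDist, polarDist, cos_neg]
  ring_nf

theorem radialAttraction_swap_neg (x y φ : ℝ) :
    radialAttraction y x (-φ) = (x * cos φ - y) / polarDist x y φ ^ 3 := by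
  rw [radialAttraction, polarDist_swap_neg, cos_neg]

theorem tangentialAttraction_swap_neg (x y φ : ℝ) :
    tangentialAttraction y x (-φ) = -(x * sin φ) / polarDist x y φ ^ 3 := by
  rw [tangentialAttraction, polarDist_swap_neg, sin_neg, mul_neg]

/-- The derivative is the power of the mutual attraction of unit masses at polar coordinates
`(x, θ)` and `(y, β + α)`. -/
theorem hasDerivAt_one_div_polarDist {x y θ β : ℝ → ℝ} {x' y' θ' β' t : ℝ} (α : ℝ)
    (hx : HasDerivAt x x' t) (hy : HasDerivAt y y' t)
    (hθ : HasDerivAt θ θ' t) (hβ : HasDerivAt β β' t)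
    (hne : polarDist (x t) (y t) (α - (θ t - β t)) ≠ 0) :
    HasDerivAt (fun s ↦ 1 / polarDist (x s) (y s) (α - (θ s - β s)))
      (x' * radialAttraction (x t) (y t) (α - (θ t - β t))
        + x t * θ' * tangentialAttraction (x t) (y t) (α - (θ t - β t))
        + (y' * radialAttraction (y t) (x t) (-(α - (θ t - β t)))
          + y t * β' * tangentialAttraction (y t) (x t) (-(α - (θ t - β t))))) t := by
  have hsq := ((hx.fun_pow 2).fun_sub (((hx.const_mul 2).fun_mul hy).fun_mul
    ((hθ.fun_sub hβ).const_sub α).cos)).fun_add (hy.fun_pow 2)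
  refine (hasDerivAt_one_div_sqrt hsq hne).congr_deriv ?_
  rw [radialAttraction_swap_neg, tangentialAttraction_swap_neg, radialAttraction,
    tangentialAttraction, polarDist]
  ring

end MutualAttraction

section TwoRings

variable {ι : Type*} [Fintype ι] {α : ι → ℝ} {μ κ₁ κ₂ : ℝ} {r₁ θ r₂ β : ℝ → ℝ}

/-- The motion, at time `t`, of two concentric rings of bodies attracting each other: `(r₁, θ)` and
`(r₂, β)` are the polar coordinates of one body of each ring, of masses `1` and `μ`, and `α` lists
the angular offsets between the bodies of the two rings. The other bodies of its own ring act on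
each of the two like central masses `κ₁` and `κ₂`. Collisions are excluded. -/
structure IsTwoRingMotionAt (α : ι → ℝ) (μ κ₁ κ₂ : ℝ) (r₁ θ r₂ β : ℝ → ℝ) (t : ℝ) : Prop where
  first : HasPolarAccelerationAt r₁ θ
    (μ * ∑ i, radialAttraction (r₁ t) (r₂ t) (α i - (θ t - β t)) - κ₁ / r₁ t ^ 2)
    (μ * ∑ i, tangentialAttraction (r₁ t) (r₂ t) (α i - (θ t - β t))) t
  second : HasPolarAccelerationAt r₂ β
    (∑ i, radialAttraction (r₂ t) (r₁ t) (-(α i - (θ t - β t))) - κ₂ / r₂ t ^ 2)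
    (∑ i, tangentialAttraction (r₂ t) (r₁ t) (-(α i - (θ t - β t)))) t
  first_ne_zero : r₁ t ≠ 0
  second_ne_zero : r₂ t ≠ 0
  polarDist_ne_zero : ∀ i, polarDist (r₁ t) (r₂ t) (α i - (θ t - β t)) ≠ 0

/-- The energy of two concentric rings as in `IsTwoRingMotionAt`, per body of the first ring. -/
noncomputable def twoRingEnergy (α : ι → ℝ) (μ κ₁ κ₂ : ℝ) (r₁ θ r₂ β : ℝ → ℝ) (t : ℝ) : ℝ :=
  polarKineticEnergy r₁ θ t + μ * polarKineticEnergy r₂ β t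
    - (κ₁ / r₁ t + μ * (κ₂ / r₂ t)
      + μ * ∑ i, 1 / polarDist (r₁ t) (r₂ t) (α i - (θ t - β t)))

theorem IsTwoRingMotionAt.hasDerivAt_twoRingEnergy {t : ℝ}
    (h : IsTwoRingMotionAt α μ κ₁ κ₂ r₁ θ r₂ β t) :
    HasDerivAt (twoRingEnergy α μ κ₁ κ₂ r₁ θ r₂ β) 0 t := by
  have hr₁ := h.first.differentiableAt_radius.hasDerivAt
  have hr₂ := h.second.differentiableAt_radius.hasDerivAt
  have hkinetic := h.first.hasDerivAt_polarKineticEnergy.fun_add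
    (h.second.hasDerivAt_polarKineticEnergy.const_mul μ)
  have hself := (hasDerivAt_const_div κ₁ hr₁ h.first_ne_zero).fun_add
    ((hasDerivAt_const_div κ₂ hr₂ h.second_ne_zero).const_mul μ)
  have hmutual := HasDerivAt.fun_sum (u := Finset.univ) fun i _ ↦
    hasDerivAt_one_div_polarDist (α i) hr₁ hr₂ h.first.differentiableAt_angle.hasDerivAt
      h.second.differentiableAt_angle.hasDerivAt (h.polarDist_ne_zero i)
  refine (hkinetic.fun_sub (hself.fun_add (hmutual.const_mul μ))).congr_deriv ?_
  simp only [Finset.sum_add_distrib, ← Finset.mul_sum]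
  ring

theorem twoRingEnergy_eq_of_isTwoRingMotionAt {s : Set ℝ} (hs : IsOpen s) (hs' : IsPreconnected s)
    (h : ∀ t ∈ s, IsTwoRingMotionAt α μ κ₁ κ₂ r₁ θ r₂ β t) {t₁ t₂ : ℝ} (ht₁ : t₁ ∈ s)
    (ht₂ : t₂ ∈ s) :
    twoRingEnergy α μ κ₁ κ₂ r₁ θ r₂ β t₁ = twoRingEnergy α μ κ₁ κ₂ r₁ θ r₂ β t₂ :=
  hs.is_const_of_deriv_eq_zero hs'
    (fun t ht ↦ (h t ht).hasDerivAt_twoRingEnergy.differentiableAt.differentiableWithinAt)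
    (fun t ht ↦ (h t ht).hasDerivAt_twoRingEnergy.deriv) ht₁ ht₂

end TwoRings

section Triangles

/-- The angular offsets of the bodies of the second triangle relative to the angle `β`. -/
noncomputable def triangleOffset : Fin 3 → ℝ := ![π / 3, π, -(π / 3)]

theorem cos_pi_div_three_sub (δ : ℝ) : cos (π / 3 - δ) = sin (π / 6 + δ) := by
  rw [← cos_pi_div_two_sub]
  ring_nf

theorem sin_pi_div_three_sub (δ : ℝ) : sin (π / 3 - δ) = cos (π / 6 + δ) := by
  rw [← sin_pi_div_two_sub]
  ring_nf

theorem cos_neg_pi_div_three_sub (δ : ℝ) : cos (-(π / 3) - δ) = sin (π / 6 - δ) := by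
  rw [← cos_neg, ← cos_pi_div_two_sub]
  ring_nf

theorem sin_neg_pi_div_three_sub (δ : ℝ) : sin (-(π / 3) - δ) = -cos (π / 6 - δ) := by
  rw [← sin_pi_div_two_sub, ← sin_neg]
  ring_nf

theorem polarDist_pi_div_three_sub (x y δ : ℝ) :
    polarDist x y (π / 3 - δ) = √(x ^ 2 - 2 * x * y * sin (π / 6 + δ) + y ^ 2) := by
  rw [polarDist, cos_pi_div_three_sub]

theorem polarDist_pi_sub (x y δ : ℝ) :
    polarDist x y (π - δ) = √(x ^ 2 + 2 * x * y * cos δ + y ^ 2) := by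
  rw [polarDist, cos_pi_sub, mul_neg, sub_neg_eq_add]

theorem polarDist_neg_pi_div_three_sub (x y δ : ℝ) :
    polarDist x y (-(π / 3) - δ) = √(x ^ 2 - 2 * x * y * sin (π / 6 - δ) + y ^ 2) := by
  rw [polarDist, cos_neg_pi_div_three_sub]

theorem sum_triangleOffset_sub (f : ℝ → ℝ) (δ : ℝ) :
    ∑ i, f (triangleOffset i - δ) = f (π / 3 - δ) + f (π - δ) + f (-(π / 3) - δ) :=
  Fin.sum_univ_three _

theorem sum_radialAttraction_triangleOffset (x y δ : ℝ) :
    ∑ i, radialAttraction x y (triangleOffset i - δ)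
      = (-x + y * sin (π / 6 + δ)) / polarDist x y (π / 3 - δ) ^ 3
        + (-x - y * cos δ) / polarDist x y (π - δ) ^ 3
        + (-x + y * sin (π / 6 - δ)) / polarDist x y (-(π / 3) - δ) ^ 3 := by
  rw [sum_triangleOffset_sub (radialAttraction x y)]
  simp only [radialAttraction, cos_pi_div_three_sub, cos_pi_sub, cos_neg_pi_div_three_sub]
  ring

theorem sum_tangentialAttraction_triangleOffset (x y δ : ℝ) :
    ∑ i, tangentialAttraction x y (triangleOffset i - δ)
      = y * cos (π / 6 + δ) / polarDist x y (π / 3 - δ) ^ 3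
        + y * sin δ / polarDist x y (π - δ) ^ 3
        - y * cos (π / 6 - δ) / polarDist x y (-(π / 3) - δ) ^ 3 := by
  rw [sum_triangleOffset_sub (tangentialAttraction x y)]
  simp only [tangentialAttraction, sin_pi_div_three_sub, sin_pi_sub, sin_neg_pi_div_three_sub]
  ring

theorem sum_radialAttraction_swap_triangleOffset (x y δ : ℝ) :
    ∑ i, radialAttraction y x (-(triangleOffset i - δ))
      = (x * sin (π / 6 + δ) - y) / polarDist x y (π / 3 - δ) ^ 3
        + (x * sin (π / 6 - δ) - y) / polarDist x y (-(π / 3) - δ) ^ 3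
        + (-(x * cos δ) - y) / polarDist x y (π - δ) ^ 3 := by
  simp only [radialAttraction_swap_neg]
  rw [sum_triangleOffset_sub (fun φ ↦ (x * cos φ - y) / polarDist x y φ ^ 3)]
  simp only [cos_pi_div_three_sub, cos_pi_sub, cos_neg_pi_div_three_sub]
  ring

theorem sum_tangentialAttraction_swap_triangleOffset (x y δ : ℝ) :
    ∑ i, tangentialAttraction y x (-(triangleOffset i - δ))
      = -(x * cos (π / 6 + δ)) / polarDist x y (π / 3 - δ) ^ 3
        + x * cos (π / 6 - δ) / polarDist x y (-(π / 3) - δ) ^ 3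
        - x * sin δ / polarDist x y (π - δ) ^ 3 := by
  simp only [tangentialAttraction_swap_neg]
  rw [sum_triangleOffset_sub (fun φ ↦ -(x * sin φ) / polarDist x y φ ^ 3)]
  simp only [sin_pi_div_three_sub, sin_pi_sub, sin_neg_pi_div_three_sub]
  ring

theorem three_mul_twoRingEnergy_triangleOffset (m : ℝ) (r₁ θ r₂ β : ℝ → ℝ) (t : ℝ) :
    3 * twoRingEnergy triangleOffset m (1 / √3) (m / √3) r₁ θ r₂ β t
      = (3 / 2) * (deriv r₁ t ^ 2 + r₁ t ^ 2 * deriv θ t ^ 2)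
        + (3 * m / 2) * (deriv r₂ t ^ 2 + r₂ t ^ 2 * deriv β t ^ 2)
        - (√3 / r₁ t + √3 * m ^ 2 / r₂ t
          + 3 * m * (1 / polarDist (r₁ t) (r₂ t) (π / 3 - (θ t - β t))
            + 1 / polarDist (r₁ t) (r₂ t) (π - (θ t - β t))
            + 1 / polarDist (r₁ t) (r₂ t) (-(π / 3) - (θ t - β t)))) := by
  have three_div_sqrt : 3 / √3 = √3 := div_sqrt
  rw [twoRingEnergy, sum_triangleOffset_sub (fun φ ↦ 1 / polarDist (r₁ t) (r₂ t) φ),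
    polarKineticEnergy, polarKineticEnergy]
  linear_combination -(1 / r₁ t + m ^ 2 / r₂ t) * three_div_sqrt

end Triangles

/-- Conservation of total energy for the reduced 6-body system:
`E = (3/2)(ṙ1² + r1² θ̇²) + (3 m2/2)(ṙ2² + r2² β̇²) − (√3/r1 + √3 m2²/r2 + 3 m2 (1/d1 + 1/d2 + 1/d3))` is constant on the interval. -/
theorem six_body_energy_conserved
    (m2 : ℝ) (hm2 : 0 < m2) (a b : ℝ)
    (r1 r2 θ β : ℝ → ℝ)
    (δ d1 d2 d3 A1 B1 A2 B2 : ℝ → ℝ)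
    (hδ : ∀ t, δ t = θ t - β t)
    (hd1 : ∀ t, d1 t =
      Real.sqrt ((r1 t)^2 - 2 * r1 t * r2 t * Real.sin (π/6 + δ t) + (r2 t)^2))
    (hd2 : ∀ t, d2 t =
      Real.sqrt ((r1 t)^2 + 2 * r1 t * r2 t * Real.cos (δ t) + (r2 t)^2))
    (hd3 : ∀ t, d3 t =
      Real.sqrt ((r1 t)^2 - 2 * r1 t * r2 t * Real.sin (π/6 - δ t) + (r2 t)^2))
    (hA1 : ∀ t, A1 t =
      (-(r1 t) + r2 t * Real.sin (π/6 + δ t)) / (d1 t)^3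
      + (-(r1 t) - r2 t * Real.cos (δ t)) / (d2 t)^3
      + (-(r1 t) + r2 t * Real.sin (π/6 - δ t)) / (d3 t)^3)
    (hB1 : ∀ t, B1 t =
      r2 t * Real.cos (π/6 + δ t) / (d1 t)^3
      + r2 t * Real.sin (δ t) / (d2 t)^3
      - r2 t * Real.cos (π/6 - δ t) / (d3 t)^3)
    (hA2 : ∀ t, A2 t =
      (r1 t * Real.sin (π/6 + δ t) - r2 t) / (d1 t)^3
      + (r1 t * Real.sin (π/6 - δ t) - r2 t) / (d3 t)^3
      + (-(r1 t * Real.cos (δ t)) - r2 t) / (d2 t)^3)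
    (hB2 : ∀ t, B2 t =
      -(r1 t * Real.cos (π/6 + δ t)) / (d1 t)^3
      + r1 t * Real.cos (π/6 - δ t) / (d3 t)^3
      - r1 t * Real.sin (δ t) / (d2 t)^3)
    (hr1pos : ∀ t ∈ Set.Ioo a b, 0 < r1 t) (hr2pos : ∀ t ∈ Set.Ioo a b, 0 < r2 t)
    (hd1pos : ∀ t ∈ Set.Ioo a b, 0 < d1 t) (hd2pos : ∀ t ∈ Set.Ioo a b, 0 < d2 t)
    (hd3pos : ∀ t ∈ Set.Ioo a b, 0 < d3 t)
    (hr1d : ∀ t ∈ Set.Ioo a b, DifferentiableAt ℝ r1 t)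
    (hr1d2 : ∀ t ∈ Set.Ioo a b, DifferentiableAt ℝ (deriv r1) t)
    (hr2d : ∀ t ∈ Set.Ioo a b, DifferentiableAt ℝ r2 t)
    (hr2d2 : ∀ t ∈ Set.Ioo a b, DifferentiableAt ℝ (deriv r2) t)
    (hθd : ∀ t ∈ Set.Ioo a b, DifferentiableAt ℝ θ t)
    (hθd2 : ∀ t ∈ Set.Ioo a b, DifferentiableAt ℝ (deriv θ) t)
    (hβd : ∀ t ∈ Set.Ioo a b, DifferentiableAt ℝ β t)
    (hβd2 : ∀ t ∈ Set.Ioo a b, DifferentiableAt ℝ (deriv β) t)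
    (hODE : ∀ t ∈ Set.Ioo a b,
      deriv (deriv θ) t = (m2 * B1 t - 2 * deriv r1 t * deriv θ t) / r1 t
      ∧ deriv (deriv r1) t =
          r1 t * (deriv θ t)^2 - 1 / (Real.sqrt 3 * (r1 t)^2) + m2 * A1 t
      ∧ deriv (deriv β) t = (B2 t - 2 * deriv r2 t * deriv β t) / r2 t
      ∧ deriv (deriv r2) t =
          r2 t * (deriv β t)^2 + A2 t - m2 / (Real.sqrt 3 * (r2 t)^2)) :
    ∀ t1 ∈ Set.Ioo a b, ∀ t2 ∈ Set.Ioo a b,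
      (3/2) * ((deriv r1 t1)^2 + (r1 t1)^2 * (deriv θ t1)^2)
        + (3 * m2 / 2) * ((deriv r2 t1)^2 + (r2 t1)^2 * (deriv β t1)^2)
        - (Real.sqrt 3 / r1 t1 + Real.sqrt 3 * m2^2 / r2 t1
            + 3 * m2 * (1 / d1 t1 + 1 / d2 t1 + 1 / d3 t1))
      = (3/2) * ((deriv r1 t2)^2 + (r1 t2)^2 * (deriv θ t2)^2)
        + (3 * m2 / 2) * ((deriv r2 t2)^2 + (r2 t2)^2 * (deriv β t2)^2)
        - (Real.sqrt 3 / r1 t2 + Real.sqrt 3 * m2^2 / r2 t2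
            + 3 * m2 * (1 / d1 t2 + 1 / d2 t2 + 1 / d3 t2)) := by
  simp only [hδ, ← polarDist_pi_div_three_sub, ← polarDist_pi_sub,
    ← polarDist_neg_pi_div_three_sub] at hd1 hd2 hd3
  simp only [hd1, hd2, hd3, hδ, ← sum_radialAttraction_triangleOffset,
    ← sum_tangentialAttraction_triangleOffset, ← sum_radialAttraction_swap_triangleOffset,
    ← sum_tangentialAttraction_swap_triangleOffset] at hA1 hB1 hA2 hB2 hd1pos hd2pos hd3pos
  have hmotion : ∀ t ∈ Set.Ioo a b,
      IsTwoRingMotionAt triangleOffset m2 (1 / √3) (m2 / √3) r1 θ r2 β t := by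
    intro t ht
    obtain ⟨hθ'', hr1'', hβ'', hr2''⟩ := hODE t ht
    have hr1 := (hr1pos t ht).ne'
    have hr2 := (hr2pos t ht).ne'
    refine ⟨⟨hr1d t ht, hr1d2 t ht, hθd t ht, hθd2 t ht, ?_, ?_⟩,
      ⟨hr2d t ht, hr2d2 t ht, hβd t ht, hβd2 t ht, ?_, ?_⟩, hr1, hr2, Fin.forall_fin_succ.2
        ⟨(hd1pos t ht).ne', Fin.forall_fin_two.2 ⟨(hd2pos t ht).ne', (hd3pos t ht).ne'⟩⟩⟩
    · rw [hr1'', ← hA1]; ring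
    · rw [hθ'', ← hB1]; field_simp; ring
    · rw [hr2'', ← hA2]; ring
    · rw [hβ'', ← hB2]; field_simp; ring
  intro t1 ht1 t2 ht2
  simp only [hd1, hd2, hd3, ← three_mul_twoRingEnergy_triangleOffset]
  rw [twoRingEnergy_eq_of_isTwoRingMotionAt isOpen_Ioo isPreconnected_Ioo hmotion ht1 ht2]
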